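/- Let μ ≥ 0 and let S : ℤ³ → ℂ satisfy S(k,m,n) = 0 whenever kmn = 0 and |S(k,m,n)| ≤ C·min{|k|^μ, |m|^μ, |n|^μ} for some constant C > 0 and all k,m,n ∈ ℤ. Let s > μ + 1/2 and set M_{s−μ} = (2 Σ_{n=1}^∞ n^{−2(s−μ)})^{1/2}. Then for all u, v, w ∈ Ḣ^s(𝕋), |(1/2π) ∫_𝕋 u·a(v,w) dx| = |Σ_{k,n∈ℤ} S(−k, k−n, n) û(−k) v̂(k−n) ŵ(n)| ≤ C·M_{s−μ}·‖u‖_s ‖v‖_0 ‖w‖_0. -/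

import Mathlib

open scoped BigOperators

/-- The homogeneous Sobolev norm of order `s` of a Fourier coefficient sequence. -/
noncomputable def hnorm (s : ℝ) (u : ℤ → ℂ) : ℝ :=
  (∑' k : ℤ, |(k : ℝ)| ^ (2 * s) * ‖u k‖ ^ 2) ^ ((1 : ℝ) / 2)

/-- Membership in the homogeneous Sobolev space `Ḣ^s(𝕋)`. -/
def InHs (s : ℝ) (u : ℤ → ℂ) : Prop :=
  u 0 = 0 ∧ (∀ k : ℤ, u (-k) = starRingEnd ℂ (u k)) ∧
    Summable fun k : ℤ => |(k : ℝ)| ^ (2 * s) * ‖u k‖ ^ 2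

/-- `M_σ = (2 Σ_{n=1}^∞ n^{−2σ})^{1/2}`. -/
noncomputable def Mconst (σ : ℝ) : ℝ :=
  Real.sqrt (2 * ∑' n : ℕ, ((n : ℝ) + 1) ^ (-(2 * σ)))

/-- The Fourier coefficients of the bilinear form `a(u,v)` determined by the kernel `S`. -/
noncomputable def aHat (S : ℤ → ℤ → ℤ → ℂ) (u v : ℤ → ℂ) (k : ℤ) : ℂ :=
  ∑' n : ℤ, S (-k) (k - n) n * u (k - n) * v n

/-!
With `m = k - n`, the bound `|S(-k, m, n)| ≤ C |k|^μ` puts all `μ` derivatives on `u`. The remaining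
sum over `n` is a convolution of two `ℓ²` sequences, hence at most `‖v‖_0 ‖w‖_0` uniformly in `k`.
What is left is `∑ |k|^μ |û(k)| = ∑ |k|^{-(s-μ)} · |k|^s |û(k)|`, and Cauchy–Schwarz bounds it by
`M_{s-μ} ‖u‖_s`, the first factor being square summable exactly when `s - μ > 1/2`.
-/

section CauchySchwarz

variable {ι : Type*} {f g : ι → ℝ}

lemma summable_mul_of_summable_sq (hf : Summable fun i => f i ^ 2)
    (hg : Summable fun i => g i ^ 2) : Summable fun i => f i * g i := by
  refine (hf.add hg).of_norm_bounded fun i => ?_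
  rw [Real.norm_eq_abs, abs_le]
  constructor <;> nlinarith [sq_nonneg (f i + g i), sq_nonneg (f i - g i)]

lemma tsum_mul_le_sqrt_mul_sqrt (hf : Summable fun i => f i ^ 2)
    (hg : Summable fun i => g i ^ 2) :
    ∑' i, f i * g i ≤ √(∑' i, f i ^ 2) * √(∑' i, g i ^ 2) := by
  have holder := Real.inner_le_Lp_mul_Lq_tsum_of_nonneg Real.HolderConjugate.two_two
    (fun i => abs_nonneg (f i)) (fun i => abs_nonneg (g i)) (by simpa using hf) (by simpa using hg)
  calc ∑' i, f i * g i
      ≤ ∑' i, |f i| * |g i| := by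
        simp only [← abs_mul]
        have hfg := summable_mul_of_summable_sq hf hg
        exact hfg.tsum_le_tsum (fun i => le_abs_self _) hfg.abs
    _ ≤ √(∑' i, f i ^ 2) * √(∑' i, g i ^ 2) := by
        simpa [Real.sqrt_eq_rpow] using holder

end CauchySchwarz

-- The term `k = 0` on the left vanishes by the convention `0 ^ (-p) = 0`.
lemma tsum_abs_int_rpow_neg {p : ℝ} (hp : 1 < p) :
    ∑' k : ℤ, |(k : ℝ)| ^ (-p) = 2 * ∑' n : ℕ, ((n : ℝ) + 1) ^ (-p) := by
  rw [tsum_int_eq_zero_add_two_mul_tsum_pnat (fun k => by simp) (Real.summable_abs_int_rpow hp),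
    tsum_pnat_eq_tsum_succ (f := fun n : ℕ => |((n : ℤ) : ℝ)| ^ (-p))]
  have abs_succ (n : ℕ) : |(n : ℝ) + 1| = n + 1 := abs_of_nonneg (by positivity)
  simp [Real.zero_rpow (neg_ne_zero.2 (zero_lt_one.trans hp).ne'), abs_succ]

lemma rpow_two_mul_eq_sq {x : ℝ} (hx : 0 ≤ x) (y : ℝ) : x ^ (2 * y) = (x ^ y) ^ 2 := by
  rw [mul_comm, Real.rpow_mul hx, Real.rpow_two]

lemma summable_sq_abs_int_rpow_neg {σ : ℝ} (hσ : 1 / 2 < σ) :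
    Summable fun k : ℤ => (|(k : ℝ)| ^ (-σ)) ^ 2 := by
  simpa only [← rpow_two_mul_eq_sq (abs_nonneg _), mul_neg] using
    Real.summable_abs_int_rpow (b := 2 * σ) (by linarith)

lemma Mconst_eq_sqrt_tsum_sq {σ : ℝ} (hσ : 1 / 2 < σ) :
    Mconst σ = √(∑' k : ℤ, (|(k : ℝ)| ^ (-σ)) ^ 2) := by
  simp only [Mconst, ← rpow_two_mul_eq_sq (abs_nonneg _), mul_neg]
  rw [tsum_abs_int_rpow_neg (by linarith)]

lemma rpow_two_mul_mul_norm_sq (s : ℝ) (u : ℤ → ℂ) (k : ℤ) :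
    |(k : ℝ)| ^ (2 * s) * ‖u k‖ ^ 2 = (|(k : ℝ)| ^ s * ‖u k‖) ^ 2 := by
  rw [rpow_two_mul_eq_sq (abs_nonneg _), mul_pow]

lemma hnorm_eq_sqrt_tsum_sq (s : ℝ) (u : ℤ → ℂ) :
    hnorm s u = √(∑' k : ℤ, (|(k : ℝ)| ^ s * ‖u k‖) ^ 2) := by
  simp only [hnorm, Real.sqrt_eq_rpow, rpow_two_mul_mul_norm_sq]

lemma hnorm_zero_eq_sqrt_tsum_sq (u : ℤ → ℂ) : hnorm 0 u = √(∑' k, ‖u k‖ ^ 2) := by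
  simp [hnorm_eq_sqrt_tsum_sq]

lemma hnorm_nonneg (s : ℝ) (u : ℤ → ℂ) : 0 ≤ hnorm s u := by
  rw [hnorm_eq_sqrt_tsum_sq]
  exact Real.sqrt_nonneg _

lemma InHs.mono {r s : ℝ} (hrs : r ≤ s) {u : ℤ → ℂ} (hu : InHs s u) : InHs r u := by
  obtain ⟨mean_zero, real_valued, summable_s⟩ := hu
  refine ⟨mean_zero, real_valued,
    summable_s.of_nonneg_of_le (fun k => by positivity) fun k => ?_⟩
  obtain rfl | hk := eq_or_ne k 0
  · simp [mean_zero]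
  · have one_le_abs : (1 : ℝ) ≤ |(k : ℝ)| := mod_cast Int.one_le_abs hk
    gcongr

lemma InHs.summable_norm_sq {s : ℝ} (hs : 0 ≤ s) {u : ℤ → ℂ} (hu : InHs s u) :
    Summable fun k => ‖u k‖ ^ 2 := by
  simpa using (hu.mono hs).2.2

section WeightedL1

variable {μ s : ℝ} {u : ℤ → ℂ}

lemma rpow_mul_norm_eq_rpow_neg_mul (hu₀ : u 0 = 0) (k : ℤ) :
    |(k : ℝ)| ^ μ * ‖u k‖ = |(k : ℝ)| ^ (-(s - μ)) * (|(k : ℝ)| ^ s * ‖u k‖) := by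
  obtain rfl | hk := eq_or_ne k 0
  · simp [hu₀]
  · rw [← mul_assoc, ← Real.rpow_add (by positivity), neg_sub, sub_add_cancel]

lemma summable_rpow_mul_norm (hs : μ + 1 / 2 < s) (hu₀ : u 0 = 0)
    (hu : Summable fun k : ℤ => |(k : ℝ)| ^ (2 * s) * ‖u k‖ ^ 2) :
    Summable fun k : ℤ => |(k : ℝ)| ^ μ * ‖u k‖ := by
  simp only [rpow_two_mul_mul_norm_sq] at hu
  simpa only [← rpow_mul_norm_eq_rpow_neg_mul hu₀] using
    summable_mul_of_summable_sq (summable_sq_abs_int_rpow_neg (σ := s - μ) (by linarith)) hu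

lemma tsum_rpow_mul_norm_le (hs : μ + 1 / 2 < s) (hu₀ : u 0 = 0)
    (hu : Summable fun k : ℤ => |(k : ℝ)| ^ (2 * s) * ‖u k‖ ^ 2) :
    ∑' k : ℤ, |(k : ℝ)| ^ μ * ‖u k‖ ≤ Mconst (s - μ) * hnorm s u := by
  have hσ : 1 / 2 < s - μ := by linarith
  simp only [rpow_two_mul_mul_norm_sq] at hu
  rw [Mconst_eq_sqrt_tsum_sq hσ, hnorm_eq_sqrt_tsum_sq]
  simpa only [← rpow_mul_norm_eq_rpow_neg_mul hu₀] using
    tsum_mul_le_sqrt_mul_sqrt (summable_sq_abs_int_rpow_neg hσ) hu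

end WeightedL1

section Trilinear

variable {S : ℤ → ℤ → ℤ → ℂ} {u v w : ℤ → ℂ}

lemma norm_aHat_le {B : ℝ} {k : ℤ} (hS : ∀ n, ‖S (-k) (k - n) n‖ ≤ B)
    (hv : Summable fun n => ‖v n‖ ^ 2) (hw : Summable fun n => ‖w n‖ ^ 2) :
    ‖aHat S v w k‖ ≤ B * (hnorm 0 v * hnorm 0 w) := by
  have hB : 0 ≤ B := (norm_nonneg _).trans (hS 0)
  have hv_shift : Summable fun n => ‖v (k - n)‖ ^ 2 := (Equiv.subLeft k).summable_iff.2 hv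
  have tsum_shift : ∑' n, ‖v (k - n)‖ ^ 2 = ∑' n, ‖v n‖ ^ 2 :=
    (Equiv.subLeft k).tsum_eq fun n => ‖v n‖ ^ 2
  have hvw := summable_mul_of_summable_sq hv_shift hw
  calc ‖aHat S v w k‖
      ≤ ∑' n, B * (‖v (k - n)‖ * ‖w n‖) := by
        refine tsum_of_norm_bounded (hvw.mul_left B).hasSum fun n => ?_
        rw [norm_mul, norm_mul, mul_assoc]
        gcongr
        exact hS n
    _ = B * ∑' n, ‖v (k - n)‖ * ‖w n‖ := tsum_mul_left
    _ ≤ B * (hnorm 0 v * hnorm 0 w) := by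
        rw [hnorm_zero_eq_sqrt_tsum_sq, hnorm_zero_eq_sqrt_tsum_sq, ← tsum_shift]
        gcongr
        exact tsum_mul_le_sqrt_mul_sqrt hv_shift hw

theorem trilinear_bound_general {μ s C : ℝ} (hs : μ + 1 / 2 < s)
    (hS : ∀ k m n : ℤ, k ≠ 0 → ‖S k m n‖ ≤ C * |(k : ℝ)| ^ μ)
    (hu₀ : u 0 = 0) (hu : Summable fun k : ℤ => |(k : ℝ)| ^ (2 * s) * ‖u k‖ ^ 2)
    (hv : Summable fun k => ‖v k‖ ^ 2) (hw : Summable fun k => ‖w k‖ ^ 2) :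
    ‖∑' k : ℤ, u (-k) * aHat S v w k‖ ≤
      C * Mconst (s - μ) * hnorm s u * hnorm 0 v * hnorm 0 w := by
  have hC : 0 ≤ C := by simpa using (norm_nonneg _).trans (hS 1 0 0 one_ne_zero)
  set K := C * (hnorm 0 v * hnorm 0 w)
  have hK : 0 ≤ K := mul_nonneg hC (mul_nonneg (hnorm_nonneg _ _) (hnorm_nonneg _ _))
  have term_le (k : ℤ) : ‖u k * aHat S v w (-k)‖ ≤ K * (|(k : ℝ)| ^ μ * ‖u k‖) := by
    obtain rfl | hk := eq_or_ne k 0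
    · simp [hu₀]
    · have aHat_le := norm_aHat_le (k := -k) (fun n => by simpa using hS k (-k - n) n hk) hv hw
      calc ‖u k * aHat S v w (-k)‖
          ≤ ‖u k‖ * (C * |(k : ℝ)| ^ μ * (hnorm 0 v * hnorm 0 w)) := by rw [norm_mul]; gcongr
        _ = K * (|(k : ℝ)| ^ μ * ‖u k‖) := by ring
  calc ‖∑' k : ℤ, u (-k) * aHat S v w k‖
      = ‖∑' k : ℤ, u k * aHat S v w (-k)‖ := by rw [← tsum_comp_neg]; simp only [neg_neg]
    _ ≤ ∑' k : ℤ, K * (|(k : ℝ)| ^ μ * ‖u k‖) :=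
        tsum_of_norm_bounded ((summable_rpow_mul_norm hs hu₀ hu).mul_left K).hasSum term_le
    _ = K * ∑' k : ℤ, |(k : ℝ)| ^ μ * ‖u k‖ := tsum_mul_left
    _ ≤ K * (Mconst (s - μ) * hnorm s u) := by gcongr; exact tsum_rpow_mul_norm_le hs hu₀ hu
    _ = C * Mconst (s - μ) * hnorm s u * hnorm 0 v * hnorm 0 w := by ring

end Trilinear

/-- The trilinear estimate
`|(1/2π) ∫ u a(v,w) dx| ≤ C M_{s−μ} ‖u‖_s ‖v‖_0 ‖w‖_0`. -/
theorem trilinear_bound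
    (μ : ℝ) (hμ : 0 ≤ μ) (S : ℤ → ℤ → ℤ → ℂ)
    (hS0 : ∀ k m n : ℤ, k * m * n = 0 → S k m n = 0)
    (C : ℝ) (hC : 0 < C)
    (hSbound : ∀ k m n : ℤ, ‖S k m n‖ ≤
      C * min (|(k : ℝ)| ^ μ) (min (|(m : ℝ)| ^ μ) (|(n : ℝ)| ^ μ)))
    (s : ℝ) (hs : μ + 1 / 2 < s)
    (u v w : ℤ → ℂ) (hu : InHs s u) (hv : InHs s v) (hw : InHs s w) :
    ‖∑' k : ℤ, u (-k) * aHat S v w k‖ ≤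
      C * Mconst (s - μ) * hnorm s u * hnorm 0 v * hnorm 0 w := by
  have hs₀ : 0 ≤ s := by linarith
  exact trilinear_bound_general hs
    (fun k m n _ => (hSbound k m n).trans (mul_le_mul_of_nonneg_left (min_le_left _ _) hC.le))
    hu.1 hu.2.2 (hv.summable_norm_sq hs₀) (hw.summable_norm_sq hs₀)
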